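/- Fix d ∈ ℕ, d ≥ 2 and q ∈ ℝ with q ≥ 1 and q > 3/d. There exists a constant Υ = Υ(d) > 0 such that for every n ∈ ℕ with n ≥ 2 and every real c ≥ (1 + 2^(d+7)/log₂ n)^(1/d), a uniformly random n^d-element subset S of the grid {1,…,⌊c·n⌋}^d satisfies ℙ[ F_n(S) > Υ·(log₂ n)^q ] ≤ Υ·n^(−2). -/

import Mathlib

/-- Euclidean distance between two points of the integer lattice `ℤ^d`. -/
noncomputable def zdist {d : ℕ} (x y : Fin d → ℤ) : ℝ :=
  Real.sqrt (∑ i, ((x i : ℝ) - (y i : ℝ)) ^ 2)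

/-- The grid `{1,…,n}^d` as a finset of `ℤ^d`. -/
noncomputable def grid (d n : ℕ) : Finset (Fin d → ℤ) :=
  Fintype.piFinset fun _ => Finset.Icc 1 (n : ℤ)

/-- `F_n(S)`: the least Lipschitz constant (Euclidean metric) of a surjection of `S`
onto the grid `{1,…,n}^d`. -/
noncomputable def Fleast (d n : ℕ) (S : Finset (Fin d → ℤ)) : ℝ :=
  sInf {L : ℝ | ∃ f : (Fin d → ℤ) → (Fin d → ℤ),
    (∀ x ∈ S, f x ∈ grid d n) ∧
    (∀ y ∈ grid d n, ∃ x ∈ S, f x = y) ∧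
    (∀ x ∈ S, ∀ y ∈ S, zdist (f x) (f y) ≤ L * zdist x y)}

/-- The grid `{1,…,m}^d` (with `m : ℤ`), as a finite type. -/
abbrev gridPt (d : ℕ) (m : ℤ) : Type := Fin d → (Finset.Icc (1 : ℤ) m : Finset ℤ)

/-- A configuration in `gridPt d m`, regarded as a finset of the integer lattice. -/
def toLattice {d : ℕ} {m : ℤ} (S : Finset (gridPt d m)) : Finset (Fin d → ℤ) :=
  S.image fun x i => (x i : ℤ)

/-- The uniform probability of an event `P` on a finite sample space `Ω`:
`ℙ(P) = |{ω : P ω}| / |Ω|`. -/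
noncomputable def uniformProb (Ω : Type*) [Fintype Ω] (P : Ω → Prop) : ℝ :=
  (Set.ncard {ω : Ω | P ω} : ℝ) / (Fintype.card Ω : ℝ)

/-!
Let `r = n / m`. The cube `(0, m]^d` is bisected repeatedly, cycling through the coordinate
directions, until the cells have side about `L / r` with `L` of order `(log₂ n)^q`. Chernoff bounds
and a union bound over all cells show that, outside an event of probability `O(n⁻²)`, every cell
contains its expected number of points of `S` up to a relative error inversely proportional to its
side.

On that event the cube `[0, n]^d` is cut along the same tree, each cut being placed so that the
volume of every part is the number of points of `S` in the corresponding cell. Since wide cells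
have small relative error, each cut moves the face by the same small amount, and the accumulated
displacement from the cells scaled by `r` is at most `L`. A cell and its target therefore lie within
`O(L)` of each other, which is Hall's condition for matching the points of `S` with the unit cubes
of `[0, n]^d`. The matching is a bijection onto the grid which moves `r • x` by `O(L)`, and distinct
lattice points are at distance at least `1`, so it is `O(L)`-Lipschitz.
-/

open Finset MeasureTheory
open scoped BigOperators ENNReal

section UniformProb

variable {Ω : Type*} [Fintype Ω]

lemma uniformProb_eq_expect (P : Ω → Prop) [DecidablePred P] :
    uniformProb Ω P = 𝔼 ω, if P ω then (1 : ℝ) else 0 := by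
  rw [uniformProb, Fintype.expect_eq_sum_div_card, sum_boole, Set.ncard_eq_toFinset_card']
  simp

lemma uniformProb_mono {P Q : Ω → Prop} (hPQ : ∀ ω, P ω → Q ω) :
    uniformProb Ω P ≤ uniformProb Ω Q := by
  classical
  simp only [uniformProb_eq_expect]
  refine expect_le_expect fun ω _ => ?_
  by_cases hP : P ω
  · simp [hP, hPQ ω hP]
  · simp only [if_neg hP]
    positivity

lemma uniformProb_eq_zero {P : Ω → Prop} (hP : ∀ ω, ¬ P ω) : uniformProb Ω P = 0 := by
  simp [uniformProb, hP]

lemma uniformProb_exists_le_sum {ι : Type*} [Fintype ι] (P : ι → Ω → Prop) :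
    uniformProb Ω (fun ω => ∃ i, P i ω) ≤ ∑ i, uniformProb Ω (P i) := by
  classical
  simp only [uniformProb_eq_expect]
  rw [← expect_sum_comm]
  refine expect_le_expect fun ω _ => ?_
  split_ifs with h
  · obtain ⟨i, hi⟩ := h
    calc (1 : ℝ) = if P i ω then 1 else 0 := by rw [if_pos hi]
      _ ≤ ∑ j, if P j ω then 1 else 0 :=
        single_le_sum (f := fun j => if P j ω then (1 : ℝ) else 0)
          (fun j _ => by positivity) (mem_univ i)
  · positivity

lemma uniformProb_or_le_add (P Q : Ω → Prop) :
    uniformProb Ω (fun ω => P ω ∨ Q ω) ≤ uniformProb Ω P + uniformProb Ω Q := by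
  simpa [Bool.exists_bool, add_comm] using uniformProb_exists_le_sum fun b : Bool => cond b Q P

lemma uniformProb_mul_le_expect {P : Ω → Prop} {f : Ω → ℝ} {a : ℝ} (hf : ∀ ω, 0 ≤ f ω)
    (ha : ∀ ω, P ω → a ≤ f ω) : uniformProb Ω P * a ≤ 𝔼 ω, f ω := by
  classical
  rw [uniformProb_eq_expect, expect_mul]
  refine expect_le_expect fun ω _ => ?_
  by_cases hP : P ω
  · simpa [hP] using ha ω hP
  · simpa [hP] using hf ω

end UniformProb

section RandomSubset

lemma choose_mul_pow_le_choose_mul_pow {N M : ℕ} (hNM : N ≤ M) (j : ℕ) :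
    N.choose j * M ^ j ≤ M.choose j * N ^ j := by
  have hdesc : N.descFactorial j * M ^ j ≤ M.descFactorial j * N ^ j := by
    have hfactor (i : ℕ) : (N - i) * M ≤ (M - i) * N := by
      rw [Nat.sub_mul, Nat.sub_mul, mul_comm M N]
      exact Nat.sub_le_sub_left (Nat.mul_le_mul_left i hNM) _
    simpa [Nat.descFactorial_eq_prod_range, prod_mul_distrib] using
      prod_le_prod' fun i (_ : i ∈ range j) => hfactor i
  rw [Nat.descFactorial_eq_factorial_mul_choose, Nat.descFactorial_eq_factorial_mul_choose,
    mul_assoc, mul_assoc] at hdesc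
  exact Nat.le_of_mul_le_mul_left hdesc j.factorial_pos

lemma one_add_pow_card_inter_eq_sum {α : Type*} [DecidableEq α] (S B : Finset α) (u : ℝ) :
    (1 + u) ^ #(S ∩ B) = ∑ A ∈ B.powerset, u ^ #A * if A ⊆ S then 1 else 0 := by
  have hbinom := Finset.sum_pow_mul_eq_add_pow u 1 (S ∩ B)
  simp only [one_pow, mul_one] at hbinom
  simp only [mul_ite, mul_one, mul_zero]
  rw [add_comm, ← hbinom, ← sum_filter]
  congr 1
  ext A
  simp only [mem_powerset, mem_filter, subset_inter_iff]
  tauto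

variable {α : Type*} [Fintype α] {N : ℕ}

/-- The mean number of elements of `B` in a uniformly random `N`-element subset of `α`. -/
noncomputable def hypergeometricMean (N : ℕ) (B : Finset α) : ℝ :=
  #B * (N / Fintype.card α)

lemma uniformProb_subset_eq (A : Finset α) (hA : #A ≤ N) :
    uniformProb {S : Finset α // #S = N} (fun S => A ⊆ S.1) =
      (Fintype.card α - #A).choose (N - #A) / (Fintype.card α).choose N := by
  classical
  have himage : Subtype.val '' {S : {S : Finset α // #S = N} | A ⊆ S.1} =
      ((powersetCard N univ).filter (A ⊆ ·) : Set (Finset α)) := by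
    ext S
    simp [and_comm]
  rw [uniformProb, Fintype.card_finset_len,
    ← Set.ncard_image_of_injective _ Subtype.val_injective, himage, Set.ncard_coe_finset,
    card_filter_powersetCard_subset A univ N (subset_univ _) hA, card_univ]

lemma uniformProb_subset_le (A : Finset α) (hN : N ≤ Fintype.card α) :
    uniformProb {S : Finset α // #S = N} (fun S => A ⊆ S.1) ≤
      ((N : ℝ) / Fintype.card α) ^ #A := by
  rcases lt_or_ge N #A with hA | hA
  · rw [uniformProb_eq_zero fun S hAS => (S.2 ▸ card_le_card hAS).not_gt hA]
    positivity
  set M := Fintype.card α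
  set j := #A
  have hchoose : (M.choose N : ℝ) * N.choose j = M.choose j * (M - j).choose (N - j) :=
    mod_cast Nat.choose_mul hA
  have hpow : (N.choose j : ℝ) * M ^ j ≤ M.choose j * N ^ j :=
    mod_cast choose_mul_pow_le_choose_mul_pow hN j
  have hMN : (0 : ℝ) < M.choose N := mod_cast Nat.choose_pos hN
  have hMj : (0 : ℝ) < M.choose j := mod_cast Nat.choose_pos (hA.trans hN)
  have hM : (0 : ℝ) < (M : ℝ) ^ j := by
    rcases j.eq_zero_or_pos with hj | hj
    · simp [hj]
    · have : 0 < M := by omega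
      positivity
  calc uniformProb {S : Finset α // #S = N} (fun S => A ⊆ S.1)
      = (M - j).choose (N - j) / M.choose N := uniformProb_subset_eq A hA
    _ = N.choose j / M.choose j := by
        rw [div_eq_div_iff hMN.ne' hMj.ne']
        linarith
    _ ≤ (N : ℝ) ^ j / M ^ j := by
        rw [div_le_div_iff₀ hMj hM]
        linarith
    _ = ((N : ℝ) / M) ^ j := (div_pow _ _ _).symm

variable [DecidableEq α]

lemma expect_one_add_pow_card_inter_le (B : Finset α) (hN : N ≤ Fintype.card α) {u : ℝ}
    (hu : 0 ≤ u) :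
    𝔼 S : {S : Finset α // #S = N}, (1 + u) ^ #(S.1 ∩ B) ≤
      (1 + u * (N / Fintype.card α)) ^ #B := by
  have hbinom := Finset.sum_pow_mul_eq_add_pow (u * (N / Fintype.card α)) 1 B
  simp only [one_pow, mul_one, mul_pow] at hbinom
  simp only [one_add_pow_card_inter_eq_sum]
  rw [expect_sum_comm, add_comm, ← hbinom]
  refine sum_le_sum fun A _ => ?_
  rw [← mul_expect]
  gcongr
  exact (uniformProb_eq_expect _).symm.trans_le (uniformProb_subset_le A hN)

lemma expect_one_add_pow_card_sdiff_le (B : Finset α) (hN : N ≤ Fintype.card α) {u : ℝ}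
    (hu : 0 ≤ u) :
    𝔼 S : {S : Finset α // #S = N}, (1 + u) ^ #(B \ S.1) ≤
      (1 + u * (1 - N / Fintype.card α)) ^ #B := by
  rcases (Fintype.card α).eq_zero_or_pos with hα | hα
  · have : IsEmpty α := Fintype.card_eq_zero_iff.1 hα
    obtain rfl : N = 0 := by omega
    simp [Finset.eq_empty_of_isEmpty B]
  let complEquiv : {S : Finset α // #S = N} ≃ {S : Finset α // #S = Fintype.card α - N} :=
    (compl_involutive (α := Finset α)).toPerm.subtypeEquiv fun S => by
      have := card_le_univ S
      simp only [Function.Involutive.coe_toPerm, card_compl]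
      omega
  have hmgf := expect_one_add_pow_card_inter_le B (Nat.sub_le (Fintype.card α) N) hu
  rw [Nat.cast_sub hN, sub_div, div_self (by positivity)] at hmgf
  refine le_of_eq_of_le (Fintype.expect_equiv complEquiv _ _ fun S => ?_) hmgf
  rw [sdiff_eq_inter_compl, inter_comm]
  rfl

-- For `t < 1` the binomial expansion has signs; passing to the complement of `S` removes them.
lemma expect_pow_card_inter_le_exp (B : Finset α) (hN : N ≤ Fintype.card α) {t : ℝ} (ht : 0 < t) :
    𝔼 S : {S : Finset α // #S = N}, t ^ #(S.1 ∩ B) ≤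
      Real.exp ((t - 1) * hypergeometricMean N B) := by
  set p : ℝ := N / Fintype.card α with hp
  have hp0 : 0 ≤ p := by positivity
  have hp1 : p ≤ 1 := div_le_one_of_le₀ (mod_cast hN) (by positivity)
  have hbernoulli : 𝔼 S : {S : Finset α // #S = N}, t ^ #(S.1 ∩ B) ≤ (1 + (t - 1) * p) ^ #B := by
    rcases le_total 1 t with h1 | h1
    · simpa using expect_one_add_pow_card_inter_le B hN (sub_nonneg.2 h1)
    · have hpow (S : {S : Finset α // #S = N}) :
          t ^ #(S.1 ∩ B) = t ^ #B * (1 + (t⁻¹ - 1)) ^ #(B \ S.1) := by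
        rw [← card_inter_add_card_sdiff B S.1, inter_comm, pow_add, mul_assoc, ← mul_pow]
        simp [ht.ne']
      simp only [hpow]
      rw [← mul_expect]
      calc t ^ #B * 𝔼 S : {S : Finset α // #S = N}, (1 + (t⁻¹ - 1)) ^ #(B \ S.1)
          ≤ t ^ #B * (1 + (t⁻¹ - 1) * (1 - p)) ^ #B := by
            gcongr
            exact expect_one_add_pow_card_sdiff_le B hN (sub_nonneg.2 ((one_le_inv₀ ht).2 h1))
        _ = (1 + (t - 1) * p) ^ #B := by
            rw [← mul_pow]
            congr 1
            field_simp
            ring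
  calc 𝔼 S : {S : Finset α // #S = N}, t ^ #(S.1 ∩ B)
      ≤ (1 + (t - 1) * p) ^ #B := hbernoulli
    _ ≤ Real.exp ((t - 1) * p) ^ #B := by
        refine pow_le_pow_left₀ ?_ ?_ _
        · nlinarith
        · linarith [Real.add_one_le_exp ((t - 1) * p)]
    _ = Real.exp ((t - 1) * hypergeometricMean N B) := by
        rw [← Real.exp_nat_mul, hypergeometricMean, ← hp]
        ring_nf

-- Positive `s` gives upper tails and negative `s` lower tails.
lemma uniformProb_mul_le_mul_card_inter_le (B : Finset α) (hN : N ≤ Fintype.card α) (s a : ℝ) :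
    uniformProb {S : Finset α // #S = N} (fun S => s * a ≤ s * #(S.1 ∩ B)) ≤
      Real.exp ((Real.exp s - 1) * hypergeometricMean N B - s * a) := by
  rw [Real.exp_sub, le_div_iff₀ (Real.exp_pos _)]
  refine (uniformProb_mul_le_expect (fun S => by positivity) fun S hS => ?_).trans
    (expect_pow_card_inter_le_exp B hN (Real.exp_pos s))
  rw [← Real.exp_nat_mul, mul_comm (_ : ℝ) s]
  exact Real.exp_le_exp.2 hS

lemma uniformProb_abs_card_inter_sub_gt_le (B : Finset α) (hN : N ≤ Fintype.card α) {ε : ℝ}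
    (hε0 : 0 ≤ ε) (hε2 : ε ≤ 2) :
    uniformProb {S : Finset α // #S = N}
        (fun S => ε * hypergeometricMean N B < |#(S.1 ∩ B) - hypergeometricMean N B|) ≤
      2 * Real.exp (-(ε ^ 2 * hypergeometricMean N B / 4)) := by
  set μ := hypergeometricMean N B with hμ
  have hμ0 : 0 ≤ μ := by
    rw [hμ, hypergeometricMean]
    positivity
  have htail {s a : ℝ} (hs : s ^ 2 = ε ^ 2 / 4) (hs1 : |s| ≤ 1)
      (ha : s * a = (s + ε ^ 2 / 2) * μ) :
      uniformProb {S : Finset α // #S = N} (fun S => s * a ≤ s * #(S.1 ∩ B)) ≤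
        Real.exp (-(ε ^ 2 * μ / 4)) := by
    refine (uniformProb_mul_le_mul_card_inter_le B hN s a).trans (Real.exp_le_exp.2 ?_)
    have hexp : Real.exp s - 1 ≤ s + ε ^ 2 / 4 := by
      linarith [(abs_le.1 (Real.abs_exp_sub_one_sub_id_le hs1)).2]
    rw [ha, ← hμ]
    nlinarith [mul_le_mul_of_nonneg_right hexp hμ0]
  have hupper := htail (s := ε / 2) (a := (1 + ε) * μ) (by ring)
    (by rw [abs_of_nonneg] <;> linarith) (by ring)
  have hlower := htail (s := -(ε / 2)) (a := (1 - ε) * μ) (by ring)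
    (by rw [abs_neg, abs_of_nonneg] <;> linarith) (by ring)
  refine (uniformProb_mono fun S hS => ?_).trans
    ((uniformProb_or_le_add _ _).trans ((add_le_add hupper hlower).trans_eq (by ring)))
  rcases lt_abs.1 hS with h | h
  · exact Or.inl (mul_le_mul_of_nonneg_left (by linarith) (by linarith))
  · exact Or.inr (mul_le_mul_of_nonpos_left (by linarith) (by linarith))

end RandomSubset

/-- An axis-parallel box, given by two opposite corners. The corners need not be ordered: a box
over `ℤ` stands for the lattice points of a half-open box, and one over `ℝ` for a closed box. -/
structure CornerBox (ι R : Type*) where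
  lower : ι → R
  upper : ι → R

namespace CornerBox

section Cut

variable {ι R : Type*} [DecidableEq ι]

/-- The part of `B` on one side of the hyperplane `x i = c`: the lower side for `false` and the
upper side for `true`. -/
def cut (B : CornerBox ι R) (i : ι) (c : R) : Bool → CornerBox ι R
  | false => { B with upper := Function.update B.upper i c }
  | true => { B with lower := Function.update B.lower i c }

lemma cut_lower_of_ne (B : CornerBox ι R) {i j : ι} (hj : j ≠ i) (c : R) (side : Bool) :
    (B.cut i c side).lower j = B.lower j := by
  cases side <;> simp [cut, hj]

lemma cut_upper_of_ne (B : CornerBox ι R) {i j : ι} (hj : j ≠ i) (c : R) (side : Bool) :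
    (B.cut i c side).upper j = B.upper j := by
  cases side <;> simp [cut, hj]

lemma Icc_subset_cut_union_cut [LinearOrder R] (B : CornerBox ι R) (i : ι) (c : R) :
    Set.Icc B.lower B.upper ⊆
      Set.Icc (B.cut i c false).lower (B.cut i c false).upper ∪
        Set.Icc (B.cut i c true).lower (B.cut i c true).upper := by
  rintro x ⟨hlower, hupper⟩
  rcases le_total (x i) c with h | h
  · exact Or.inl ⟨hlower, le_update_iff.2 ⟨h, fun j _ => hupper j⟩⟩
  · exact Or.inr ⟨update_le_iff.2 ⟨h, fun j _ => hlower j⟩, hupper⟩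

end Cut

section Width

variable {ι R : Type*} [Sub R]

/-- The side length of a box in direction `i`. -/
def width (B : CornerBox ι R) (i : ι) : R :=
  B.upper i - B.lower i

variable [DecidableEq ι]

lemma width_cut_of_ne (B : CornerBox ι R) {i j : ι} (hj : j ≠ i) (c : R) (side : Bool) :
    (B.cut i c side).width j = B.width j := by
  rw [width, cut_lower_of_ne B hj, cut_upper_of_ne B hj, width]

lemma prod_comp_width_cut [Fintype ι] {K : Type*} [CommMonoid K] (B : CornerBox ι R) (F : R → K)
    {i : ι} {c : R} {side : Bool} {t : K}
    (ht : F ((B.cut i c side).width i) = F (B.width i) * t) :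
    ∏ j, F ((B.cut i c side).width j) = (∏ j, F (B.width j)) * t := by
  have hrest : ∏ j ∈ univ.erase i, F ((B.cut i c side).width j) =
      ∏ j ∈ univ.erase i, F (B.width j) :=
    prod_congr rfl fun j hj => by rw [width_cut_of_ne B (ne_of_mem_erase hj)]
  rw [← mul_prod_erase _ _ (mem_univ i), ← mul_prod_erase univ (fun j => F (B.width j))
    (mem_univ i), ht, hrest, mul_right_comm]

lemma prod_width_cut_lineMap [Fintype ι] (B : CornerBox ι ℝ) (i : ι) (θ : ℝ) (side : Bool) :
    ∏ j, (B.cut i (AffineMap.lineMap (B.lower i) (B.upper i) θ) side).width j =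
      (∏ j, B.width j) * cond side (1 - θ) θ := by
  refine B.prod_comp_width_cut id ?_
  cases side <;>
    simp only [cut, width, id_eq, Function.update_self, AffineMap.lineMap_apply_ring', cond_true,
      cond_false] <;>
    ring

end Width

section LatticePoints

variable {ι : Type*} [Fintype ι] [DecidableEq ι] (B : CornerBox ι ℤ)

/-- The lattice points of the half-open box `∏ i, (lower i, upper i]`. -/
noncomputable def latticePoints : Finset (ι → ℤ) :=
  Fintype.piFinset fun i => Ioc (B.lower i) (B.upper i)

variable {B}

lemma mem_latticePoints {x : ι → ℤ} :
    x ∈ B.latticePoints ↔ ∀ i, B.lower i < x i ∧ x i ≤ B.upper i := by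
  simp [latticePoints]

lemma card_latticePoints (hB : B.lower ≤ B.upper) : (#B.latticePoints : ℤ) = ∏ i, B.width i := by
  rw [latticePoints, Fintype.card_piFinset, Nat.cast_prod]
  refine prod_congr rfl fun i _ => ?_
  rw [Int.card_Ioc, Int.toNat_of_nonneg (sub_nonneg.2 (hB i)), width]

variable {i : ι} {c : ℤ}

lemma mem_latticePoints_cut_false (hc : c ≤ B.upper i) {x : ι → ℤ} :
    x ∈ (B.cut i c false).latticePoints ↔ x ∈ B.latticePoints ∧ x i ≤ c := by
  simp only [mem_latticePoints, cut]
  refine ⟨fun h => ⟨fun j => ⟨(h j).1, ?_⟩, by simpa using (h i).2⟩, fun h j => ⟨(h.1 j).1, ?_⟩⟩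
  · rcases eq_or_ne j i with rfl | hj
    · exact le_trans (by simpa using (h j).2) hc
    · simpa [hj] using (h j).2
  · rcases eq_or_ne j i with rfl | hj
    · simpa using h.2
    · simpa [hj] using (h.1 j).2

lemma mem_latticePoints_cut_true (hc : B.lower i ≤ c) {x : ι → ℤ} :
    x ∈ (B.cut i c true).latticePoints ↔ x ∈ B.latticePoints ∧ c < x i := by
  simp only [mem_latticePoints, cut]
  refine ⟨fun h => ⟨fun j => ⟨?_, (h j).2⟩, by simpa using (h i).1⟩, fun h j => ⟨?_, (h.1 j).2⟩⟩
  · rcases eq_or_ne j i with rfl | hj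
    · exact lt_of_le_of_lt hc (by simpa using (h j).1)
    · simpa [hj] using (h j).1
  · rcases eq_or_ne j i with rfl | hj
    · simpa using h.2
    · simpa [hj] using (h.1 j).1

lemma latticePoints_cut_union (hlower : B.lower i ≤ c) (hupper : c ≤ B.upper i) :
    (B.cut i c false).latticePoints ∪ (B.cut i c true).latticePoints = B.latticePoints := by
  ext x
  rw [mem_union, mem_latticePoints_cut_false hupper, mem_latticePoints_cut_true hlower,
    ← and_or_left, and_iff_left (le_or_gt (x i) c)]

lemma disjoint_latticePoints_cut (hlower : B.lower i ≤ c) (hupper : c ≤ B.upper i) :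
    Disjoint (B.cut i c false).latticePoints (B.cut i c true).latticePoints :=
  disjoint_left.2 fun _ hfalse htrue =>
    ((mem_latticePoints_cut_true hlower).1 htrue).2.not_ge
      ((mem_latticePoints_cut_false hupper).1 hfalse).2

lemma card_inter_latticePoints_cut (S : Finset (ι → ℤ)) (hlower : B.lower i ≤ c)
    (hupper : c ≤ B.upper i) :
    #(S ∩ (B.cut i c false).latticePoints) + #(S ∩ (B.cut i c true).latticePoints) =
      #(S ∩ B.latticePoints) := by
  rw [← latticePoints_cut_union hlower hupper, inter_union_distrib_left, card_union_of_disjoint]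
  exact (disjoint_latticePoints_cut hlower hupper).mono inter_subset_right inter_subset_right

end LatticePoints

end CornerBox

section HallCondition

variable {X E : Type*} [PseudoMetricSpace E] [MeasureSpace E]

open Classical in
/-- Hall's marriage condition between the finite set `P` of points with images `φ x` and the
volume of `I`: every part of `I` has at most as much volume as there are points of `P` whose image
is within distance `R` of it. -/
def HallCondition (φ : X → E) (R : ℝ) (P : Finset X) (I : Set E) : Prop :=
  ∀ A : Set E, volume (A ∩ I) ≤ #{x ∈ P | ∃ y ∈ A, dist (φ x) y ≤ R}

namespace HallCondition

variable {φ : X → E} {R : ℝ} {P Q : Finset X} {I J : Set E}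

lemma of_dist_le (hvol : volume I ≤ #P) (hdist : ∀ x ∈ P, ∀ y ∈ I, dist (φ x) y ≤ R) :
    HallCondition φ R P I := by
  classical
  intro A
  rcases (A ∩ I).eq_empty_or_nonempty with hA | ⟨y, hyA, hyI⟩
  · simp [hA]
  · refine (measure_mono Set.inter_subset_right).trans (hvol.trans ?_)
    rw [filter_true_of_mem fun x hx => ⟨y, hyA, hdist x hx y hyI⟩]

lemma mono (h : HallCondition φ R P J) (hIJ : I ⊆ J) : HallCondition φ R P I :=
  fun A => (measure_mono (Set.inter_subset_inter_right A hIJ)).trans (h A)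

lemma union [DecidableEq X] (hP : HallCondition φ R P I) (hQ : HallCondition φ R Q J)
    (hPQ : Disjoint P Q) : HallCondition φ R (P ∪ Q) (I ∪ J) := by
  classical
  intro A
  rw [Set.inter_union_distrib_left, filter_union]
  calc volume (A ∩ I ∪ A ∩ J)
      ≤ volume (A ∩ I) + volume (A ∩ J) := measure_union_le _ _
    _ ≤ #{x ∈ P | ∃ y ∈ A, dist (φ x) y ≤ R} + #{x ∈ Q | ∃ y ∈ A, dist (φ x) y ≤ R} :=
        add_le_add (hP A) (hQ A)
    _ = #({x ∈ P | ∃ y ∈ A, dist (φ x) y ≤ R} ∪ {x ∈ Q | ∃ y ∈ A, dist (φ x) y ≤ R}) := by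
        rw [card_union_of_disjoint (disjoint_filter_filter hPQ), Nat.cast_add]

lemma exists_injective {κ : Type*} (h : HallCondition φ R P I) {U : κ → Set E}
    (hU : ∀ k, MeasurableSet (U k)) (hdisj : Pairwise (Function.onFun Disjoint U))
    (hUI : ∀ k, U k ⊆ I) (hvol : ∀ k, 1 ≤ volume (U k)) :
    ∃ g : κ → X, Function.Injective g ∧ ∀ k, g k ∈ P ∧ ∃ y ∈ U k, dist (φ (g k)) y ≤ R := by
  classical
  let near (k : κ) : Finset X := {x ∈ P | ∃ y ∈ U k, dist (φ x) y ≤ R}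
  suffices hhall : ∀ s : Finset κ, #s ≤ #(s.biUnion near) by
    obtain ⟨g, hg, hnear⟩ := (all_card_le_biUnion_card_iff_exists_injective near).1 hhall
    exact ⟨g, hg, fun k => mem_filter.1 (hnear k)⟩
  intro s
  have hnear : ({x ∈ P | ∃ y ∈ ⋃ k ∈ s, U k, dist (φ x) y ≤ R} : Finset X) = s.biUnion near := by
    ext x
    simp only [near, mem_filter, mem_biUnion, Set.mem_iUnion]
    grind
  have hcount : (#s : ℝ≥0∞) ≤ #(s.biUnion near) :=
    calc (#s : ℝ≥0∞) = ∑ _k ∈ s, 1 := by simp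
      _ ≤ ∑ k ∈ s, volume (U k) := sum_le_sum fun k _ => hvol k
      _ = volume (⋃ k ∈ s, U k) :=
          (measure_biUnion_finset (hdisj.set_pairwise _) fun k _ => hU k).symm
      _ = volume ((⋃ k ∈ s, U k) ∩ I) := by
          rw [Set.inter_eq_left.2 (Set.iUnion₂_subset fun k _ => hUI k)]
      _ ≤ #(s.biUnion near) := hnear ▸ h (⋃ k ∈ s, U k)
  exact_mod_cast hcount

end HallCondition

end HallCondition

section Cells

namespace CornerBox

variable {ι : Type*}

/-- The midpoint of side `i` of an integer box, rounded down. -/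
def mid (B : CornerBox ι ℤ) (i : ι) : ℤ :=
  (B.lower i + B.upper i) / 2

lemma lower_le_mid {B : CornerBox ι ℤ} {i : ι} (h : B.lower i ≤ B.upper i) :
    B.lower i ≤ B.mid i := by
  unfold mid
  omega

lemma mid_le_upper {B : CornerBox ι ℤ} {i : ι} (h : B.lower i ≤ B.upper i) :
    B.mid i ≤ B.upper i := by
  unfold mid
  omega

lemma exists_mid_eq_lineMap {B : CornerBox ι ℤ} {i : ι} (h : B.lower i ≤ B.upper i) :
    ∃ τ : ℝ, 0 ≤ τ ∧ τ ≤ 1 ∧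
      (B.mid i : ℝ) = AffineMap.lineMap (B.lower i : ℝ) (B.upper i : ℝ) τ := by
  have hmem : (B.mid i : ℝ) ∈ Set.Icc (B.lower i : ℝ) (B.upper i : ℝ) :=
    ⟨mod_cast lower_le_mid h, mod_cast mid_le_upper h⟩
  rw [← segment_eq_Icc (mod_cast h), segment_eq_image_lineMap] at hmem
  obtain ⟨τ, ⟨hτ0, hτ1⟩, hτ⟩ := hmem
  exact ⟨τ, hτ0, hτ1, hτ.symm⟩

lemma abs_width_cut_mid_sub_le [DecidableEq ι] (B : CornerBox ι ℤ) (i : ι) (side : Bool) :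
    |((B.cut i (B.mid i) side).width i : ℝ) - B.width i / 2| ≤ 1 / 2 := by
  have hdouble : |2 * (B.cut i (B.mid i) side).width i - B.width i| ≤ 1 := by
    rw [abs_le]
    cases side <;> simp only [cut, width, mid, Function.update_self] <;> omega
  have hcast : |2 * ((B.cut i (B.mid i) side).width i : ℝ) - B.width i| ≤ 1 := by
    exact_mod_cast hdouble
  rw [abs_le] at hcast ⊢
  constructor <;> linarith

lemma cut_lower_le_upper [DecidableEq ι] {B : CornerBox ι ℤ} {i : ι} {c : ℤ}
    (hB : B.lower ≤ B.upper) (hlower : B.lower i ≤ c) (hupper : c ≤ B.upper i) (side : Bool) :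
    (B.cut i c side).lower ≤ (B.cut i c side).upper := by
  cases side
  · exact le_update_iff.2 ⟨hlower, fun j _ => hB j⟩
  · exact update_le_iff.2 ⟨hupper, fun j _ => hB j⟩

/-- The expected number of points in `B` of a random set of lattice points of density
`r ^ card ι`: the volume of `B` after scaling by `r`. -/
noncomputable def expectedCount [Fintype ι] (r : ℝ) (B : CornerBox ι ℤ) : ℝ :=
  ∏ i, r * B.width i

lemma expectedCount_eq_card_mul_pow [Fintype ι] [DecidableEq ι] {B : CornerBox ι ℤ}
    (hB : B.lower ≤ B.upper) (r : ℝ) :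
    expectedCount r B = #B.latticePoints * r ^ Fintype.card ι := by
  have hcard : (#B.latticePoints : ℝ) = ∏ i, (B.width i : ℝ) := mod_cast card_latticePoints hB
  rw [expectedCount, prod_mul_distrib, prod_const, card_univ, hcard, mul_comm]

lemma expectedCount_cut_false [Fintype ι] [DecidableEq ι] {B : CornerBox ι ℤ} {i : ι} {c : ℤ}
    {τ : ℝ} (hc : (c : ℝ) = AffineMap.lineMap (B.lower i : ℝ) (B.upper i : ℝ) τ) (r : ℝ) :
    expectedCount r (B.cut i c false) = expectedCount r B * τ := by
  refine B.prod_comp_width_cut (fun w => r * (w : ℝ)) ?_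
  simp only [cut, width, Function.update_self, Int.cast_sub, hc, AffineMap.lineMap_apply_ring']
  ring

end CornerBox

variable (d : ℕ)

/-- The number of stages before stage `s` at which the sides in direction `i` are halved, when
the directions are cut cyclically. -/
def halvings (s : ℕ) (i : Fin d) : ℕ :=
  Nat.count (· ≡ i [MOD d]) s

lemma div_le_halvings [NeZero d] (s : ℕ) (i : Fin d) : s / d ≤ halvings d s i := by
  rw [halvings, Nat.count_modEq_card _ (NeZero.pos d)]
  exact Nat.le_add_right _ _

lemma halvings_le_div_add_one [NeZero d] (s : ℕ) (i : Fin d) : halvings d s i ≤ s / d + 1 := by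
  rw [halvings, Nat.count_modEq_card _ (NeZero.pos d)]
  split_ifs <;> omega

lemma halvings_succ [NeZero d] (s : ℕ) (i : Fin d) :
    halvings d (s + 1) i = halvings d s i + if i = Fin.ofNat d s then 1 else 0 := by
  have hiff : s ≡ i [MOD d] ↔ i = Fin.ofNat d s := by
    rw [Fin.ext_iff, Fin.val_ofNat, Nat.ModEq, Nat.mod_eq_of_lt i.isLt, eq_comm]
  simp only [halvings, Nat.count_succ, hiff]

/-- The side length, up to a constant factor, of the stage-`s` cells of the cube of side `n`. -/
noncomputable def cellScale (n s : ℕ) : ℝ :=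
  n / 2 ^ (s / d)

lemma cellScale_nonneg (n s : ℕ) : 0 ≤ cellScale d n s := by
  unfold cellScale
  positivity

lemma cellScale_anti (n : ℕ) {s t : ℕ} (hst : s ≤ t) : cellScale d n t ≤ cellScale d n s := by
  unfold cellScale
  gcongr
  norm_num

lemma cellScale_le_two_mul_succ (n s : ℕ) : cellScale d n s ≤ 2 * cellScale d n (s + 1) := by
  have hdiv : (s + 1) / d ≤ s / d + 1 := by
    rw [Nat.succ_div]
    split_ifs <;> omega
  calc cellScale d n s = 2 * (n / 2 ^ (s / d + 1)) := by
        rw [cellScale]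
        field_simp
        ring
    _ ≤ 2 * cellScale d n (s + 1) := by
        unfold cellScale
        gcongr
        norm_num

variable [NeZero d]

/-- The cells of the dyadic subdivision of the cube `(0, m]^d`. A cell is addressed by the word
of sides chosen on the way to it, the last choice first; stage `s` cuts direction `s` modulo `d`. -/
def cell (m : ℤ) : List Bool → CornerBox (Fin d) ℤ
  | [] => ⟨0, fun _ => m⟩
  | side :: w => (cell m w).cut (Fin.ofNat d w.length) ((cell m w).mid (Fin.ofNat d w.length)) side

variable {d} {m : ℤ}

lemma cell_lower_le_upper (hm : 0 ≤ m) (w : List Bool) :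
    (cell d m w).lower ≤ (cell d m w).upper := by
  induction w with
  | nil => exact fun _ => hm
  | cons side w ih =>
    exact CornerBox.cut_lower_le_upper ih (CornerBox.lower_le_mid (ih _))
      (CornerBox.mid_le_upper (ih _)) side

lemma latticePoints_cell_cons_union (hm : 0 ≤ m) (w : List Bool) :
    (cell d m (false :: w)).latticePoints ∪ (cell d m (true :: w)).latticePoints =
      (cell d m w).latticePoints :=
  CornerBox.latticePoints_cut_union (CornerBox.lower_le_mid (cell_lower_le_upper hm w _))
    (CornerBox.mid_le_upper (cell_lower_le_upper hm w _))

lemma disjoint_latticePoints_cell_cons (hm : 0 ≤ m) (w : List Bool) :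
    Disjoint (cell d m (false :: w)).latticePoints
      (cell d m (true :: w)).latticePoints :=
  CornerBox.disjoint_latticePoints_cut (CornerBox.lower_le_mid (cell_lower_le_upper hm w _))
    (CornerBox.mid_le_upper (cell_lower_le_upper hm w _))

lemma latticePoints_cell_subset_nil (hm : 0 ≤ m) (w : List Bool) :
    (cell d m w).latticePoints ⊆ (cell d m []).latticePoints := by
  induction w with
  | nil => exact Subset.rfl
  | cons side w ih =>
    refine Subset.trans ?_ ih
    rw [← latticePoints_cell_cons_union hm w]
    cases side
    exacts [subset_union_left, subset_union_right]

lemma abs_width_cell_sub_le (w : List Bool) (i : Fin d) :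
    |((cell d m w).width i : ℝ) - m / 2 ^ halvings d w.length i| ≤ 1 := by
  induction w with
  | nil => simp [cell, CornerBox.width, halvings]
  | cons side w ih =>
    rw [List.length_cons, halvings_succ, cell]
    rcases eq_or_ne i (Fin.ofNat d w.length) with hi | hi
    · rw [← hi, if_pos rfl, pow_succ, ← div_div]
      have hcut := abs_le.1 ((cell d m w).abs_width_cut_mid_sub_le i side)
      rw [abs_le] at ih ⊢
      constructor <;> linarith
    · rwa [if_neg hi, add_zero, CornerBox.width_cut_of_ne _ hi]

variable {n : ℕ} {w : List Bool}

lemma abs_mul_width_cell_sub_le (hnm : n ≤ m) (w : List Bool) (i : Fin d) :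
    |(n / m : ℝ) * (cell d m w).width i - n / 2 ^ halvings d w.length i| ≤ 1 := by
  have hnm' : (n : ℝ) ≤ m := mod_cast hnm
  have hm : (0 : ℝ) ≤ m := n.cast_nonneg.trans hnm'
  have hscale : (n / m : ℝ) * m = n :=
    div_mul_cancel_of_imp fun h => le_antisymm (hnm'.trans h.le) n.cast_nonneg
  have hfactor : (n / m : ℝ) * (cell d m w).width i - n / 2 ^ halvings d w.length i =
      n / m * ((cell d m w).width i - m / 2 ^ halvings d w.length i) := by
    rw [mul_sub, ← mul_div_assoc, hscale]
  rw [hfactor, abs_mul, abs_of_nonneg (by positivity)]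
  exact mul_le_one₀ (div_le_one_of_le₀ hnm' hm) (abs_nonneg _) (abs_width_cell_sub_le w i)

lemma mul_width_cell_le (hnm : n ≤ m) (hscale : 4 ≤ cellScale d n w.length) (i : Fin d) :
    n / m * (cell d m w).width i ≤ 2 * cellScale d n w.length := by
  have hpow : (n : ℝ) / 2 ^ halvings d w.length i ≤ cellScale d n w.length := by
    unfold cellScale
    gcongr
    exacts [one_le_two, div_le_halvings d w.length i]
  linarith [(abs_le.1 (abs_mul_width_cell_sub_le hnm w i)).2]

lemma cellScale_div_four_le_mul_width_cell (hnm : n ≤ m) (hscale : 4 ≤ cellScale d n w.length)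
    (i : Fin d) : cellScale d n w.length / 4 ≤ n / m * (cell d m w).width i := by
  have hpow : cellScale d n w.length / 2 ≤ n / 2 ^ halvings d w.length i := by
    rw [cellScale, div_div, ← pow_succ]
    gcongr
    exacts [one_le_two, halvings_le_div_add_one d w.length i]
  linarith [(abs_le.1 (abs_mul_width_cell_sub_le hnm w i)).1]

lemma cellScale_div_four_pow_le_expectedCount (hnm : n ≤ m)
    (hscale : 4 ≤ cellScale d n w.length) :
    (cellScale d n w.length / 4) ^ d ≤ (cell d m w).expectedCount (n / m) := by
  calc (cellScale d n w.length / 4) ^ d = ∏ _i : Fin d, cellScale d n w.length / 4 := by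
        rw [prod_const, card_univ, Fintype.card_fin]
    _ ≤ (cell d m w).expectedCount (n / m) :=
        prod_le_prod (fun _ _ => by linarith) fun i _ =>
          cellScale_div_four_le_mul_width_cell hnm hscale i

end Cells

section TargetBoxes

lemma abs_div_sub_le_of_abs_sub_le {N N₁ μ τ ε : ℝ} (hμ : 0 < μ) (hτ0 : 0 ≤ τ) (hτ1 : τ ≤ 1)
    (hε : ε ≤ 1 / 2) (hN : |N - μ| ≤ ε * μ) (hN₁ : |N₁ - τ * μ| ≤ 2 * ε * (τ * μ)) :
    0 < N ∧ |N₁ / N - τ| ≤ 6 * ε := by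
  have hε0 : 0 ≤ ε := nonneg_of_mul_nonneg_left ((abs_nonneg _).trans hN) hμ
  have hhalf : μ / 2 ≤ N := by nlinarith [(abs_le.1 hN).1]
  have hpos : 0 < N := by linarith
  have hdiff : |N₁ - τ * N| ≤ 3 * ε * μ :=
    calc |N₁ - τ * N| = |(N₁ - τ * μ) - τ * (N - μ)| := by ring_nf
      _ ≤ |N₁ - τ * μ| + τ * |N - μ| := by
          simpa only [abs_mul, abs_of_nonneg hτ0] using abs_sub (N₁ - τ * μ) (τ * (N - μ))
      _ ≤ 2 * ε * (τ * μ) + τ * (ε * μ) := by gcongr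
      _ = τ * (3 * ε * μ) := by ring
      _ ≤ 3 * ε * μ := mul_le_of_le_one_left (by positivity) hτ1
  refine ⟨hpos, ?_⟩
  rw [div_sub' hpos.ne', abs_div, abs_of_pos hpos, div_le_iff₀ hpos, mul_comm N τ]
  nlinarith

lemma abs_lineMap_sub_lineMap_le {a b a' b' θ τ δ : ℝ} (hτ0 : 0 ≤ τ) (hτ1 : τ ≤ 1)
    (ha : |a' - a| ≤ δ) (hb : |b' - b| ≤ δ) :
    |AffineMap.lineMap a' b' θ - AffineMap.lineMap a b τ| ≤ δ + |b' - a'| * |θ - τ| := by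
  have hsplit : AffineMap.lineMap a' b' θ - AffineMap.lineMap a b τ =
      ((1 - τ) * (a' - a) + τ * (b' - b)) + (b' - a') * (θ - τ) := by
    simp only [AffineMap.lineMap_apply_ring']
    ring
  have hconvex : |(1 - τ) * (a' - a) + τ * (b' - b)| ≤ δ := by
    rw [abs_le] at ha hb ⊢
    constructor <;> nlinarith
  rw [hsplit, ← abs_mul]
  exact (abs_add_le _ _).trans (add_le_add_left hconvex _)

variable {d : ℕ} {S : Finset (Fin d → ℤ)} {r δ : ℝ} {B : CornerBox (Fin d) ℤ}
  {T : CornerBox (Fin d) ℝ}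

/-- `T` is a box whose volume is the number of points of `S` in the lattice box `B` and whose faces
are within `δ` of the corresponding faces of `B` scaled by `r`. -/
structure IsTargetBox (S : Finset (Fin d → ℤ)) (r δ : ℝ) (B : CornerBox (Fin d) ℤ)
    (T : CornerBox (Fin d) ℝ) : Prop where
  lower_le_upper : T.lower ≤ T.upper
  prod_width : ∏ i, T.width i = #(S ∩ B.latticePoints)
  abs_lower_sub_le : ∀ i, |T.lower i - r * B.lower i| ≤ δ
  abs_upper_sub_le : ∀ i, |T.upper i - r * B.upper i| ≤ δ

namespace IsTargetBox

lemma volume_Icc (hT : IsTargetBox S r δ B T) :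
    volume (Set.Icc T.lower T.upper) = #(S ∩ B.latticePoints) := by
  rw [Real.volume_Icc_pi, ← ENNReal.ofReal_prod_of_nonneg fun i _ =>
    sub_nonneg.2 (hT.lower_le_upper i), ← ENNReal.ofReal_natCast, ← hT.prod_width]
  rfl

lemma width_le (hT : IsTargetBox S r δ B T) (i : Fin d) :
    T.width i ≤ r * B.width i + 2 * δ := by
  have hlower := abs_le.1 (hT.abs_lower_sub_le i)
  have hupper := abs_le.1 (hT.abs_upper_sub_le i)
  simp only [CornerBox.width, Int.cast_sub]
  linarith

lemma cut (hT : IsTargetBox S r δ B T) {κ : ℝ} (hκ : 0 ≤ κ) {i : Fin d} {c : ℤ} {x : ℝ}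
    {side : Bool}
    (hx : x ∈ Set.Icc (T.lower i) (T.upper i)) (hxc : |x - r * c| ≤ δ + κ)
    (hprod : ∏ j, (T.cut i x side).width j = #(S ∩ (B.cut i c side).latticePoints)) :
    IsTargetBox S r (δ + κ) (B.cut i c side) (T.cut i x side) := by
  have hlower (j : Fin d) := (hT.abs_lower_sub_le j).trans (le_add_of_nonneg_right hκ)
  have hupper (j : Fin d) := (hT.abs_upper_sub_le j).trans (le_add_of_nonneg_right hκ)
  cases side
  · refine ⟨le_update_iff.2 ⟨hx.1, fun j _ => hT.lower_le_upper j⟩, hprod, hlower, fun j => ?_⟩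
    rcases eq_or_ne j i with rfl | hj
    · simpa [CornerBox.cut] using hxc
    · simpa [CornerBox.cut, hj] using hupper j
  · refine ⟨update_le_iff.2 ⟨hx.2, fun j _ => hT.lower_le_upper j⟩, hprod, fun j => ?_, hupper⟩
    rcases eq_or_ne j i with rfl | hj
    · simpa [CornerBox.cut] using hxc
    · simpa [CornerBox.cut, hj] using hlower j

lemma abs_lineMap_sub_mul_le (hT : IsTargetBox S r δ B T) {i : Fin d} {c θ τ : ℝ} (hτ0 : 0 ≤ τ)
    (hτ1 : τ ≤ 1) (hc : c = AffineMap.lineMap (B.lower i : ℝ) (B.upper i : ℝ) τ) :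
    |AffineMap.lineMap (T.lower i) (T.upper i) θ - r * c| ≤ δ + T.width i * |θ - τ| := by
  have hrc : r * c = AffineMap.lineMap (r * B.lower i) (r * B.upper i) τ := by
    simp only [hc, AffineMap.lineMap_apply_ring']
    ring
  have hwidth : |T.upper i - T.lower i| = T.width i :=
    abs_of_nonneg (sub_nonneg.2 (hT.lower_le_upper i))
  rw [hrc, ← hwidth]
  exact abs_lineMap_sub_lineMap_le hτ0 hτ1 (hT.abs_lower_sub_le i) (hT.abs_upper_sub_le i)

-- The target box is cut so that the volumes of its two parts are the two point counts.
lemma exists_cut (hT : IsTargetBox S r δ B T) {κ τ : ℝ} {i : Fin d} {c : ℤ}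
    (hclower : B.lower i ≤ c) (hcupper : c ≤ B.upper i) (hτ0 : 0 ≤ τ) (hτ1 : τ ≤ 1)
    (hc : (c : ℝ) = AffineMap.lineMap (B.lower i : ℝ) (B.upper i : ℝ) τ)
    (hpos : (0 : ℝ) < #(S ∩ B.latticePoints))
    (hκ : T.width i *
      |(#(S ∩ (B.cut i c false).latticePoints) / #(S ∩ B.latticePoints) : ℝ) - τ| ≤ κ) :
    ∃ x, ∀ side, IsTargetBox S r (δ + κ) (B.cut i c side) (T.cut i x side) := by
  have hsum : (#(S ∩ (B.cut i c false).latticePoints) + #(S ∩ (B.cut i c true).latticePoints) : ℝ) =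
      #(S ∩ B.latticePoints) := mod_cast CornerBox.card_inter_latticePoints_cut S hclower hcupper
  have hwidth : 0 ≤ T.width i := sub_nonneg.2 (hT.lower_le_upper i)
  set θ : ℝ := #(S ∩ (B.cut i c false).latticePoints) / #(S ∩ B.latticePoints) with hθ
  have hθ1 : θ ≤ 1 := div_le_one_of_le₀ (hsum ▸ le_add_of_nonneg_right (Nat.cast_nonneg _)) hpos.le
  have hx : AffineMap.lineMap (T.lower i) (T.upper i) θ ∈ Set.Icc (T.lower i) (T.upper i) := by
    rw [← segment_eq_Icc (hT.lower_le_upper i), segment_eq_image_lineMap]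
    exact ⟨θ, ⟨div_nonneg (Nat.cast_nonneg _) hpos.le, hθ1⟩, rfl⟩
  refine ⟨AffineMap.lineMap (T.lower i) (T.upper i) θ, fun side =>
    hT.cut ((mul_nonneg hwidth (abs_nonneg _)).trans hκ) hx
      ((hT.abs_lineMap_sub_mul_le hτ0 hτ1 hc).trans (by gcongr)) ?_⟩
  rw [CornerBox.prod_width_cut_lineMap, hT.prod_width]
  cases side
  · exact mul_div_cancel₀ _ hpos.ne'
  · rw [cond_true, mul_sub, mul_one, hθ, mul_div_cancel₀ _ hpos.ne']
    exact sub_eq_of_eq_add' hsum.symm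

end IsTargetBox

end TargetBoxes

section BalancedSets

variable {d n D : ℕ} {m : ℤ} {η δ L : ℝ} {S : Finset (Fin d → ℤ)} {w : List Bool}
  {T : CornerBox (Fin d) ℝ}

/-- The dilation of the lattice by the factor `r`. -/
def scaleBy (r : ℝ) (x : Fin d → ℤ) : Fin d → ℝ :=
  fun i => r * x i

lemma IsTargetBox.dist_scaleBy_le {r : ℝ} {B : CornerBox (Fin d) ℤ} (hT : IsTargetBox S r δ B T)
    (hr : 0 ≤ r) (hwidth : ∀ i, r * B.width i + δ ≤ L) (hL : 0 ≤ L) {x : Fin d → ℤ}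
    (hx : x ∈ B.latticePoints) {y : Fin d → ℝ} (hy : y ∈ Set.Icc T.lower T.upper) :
    dist (scaleBy r x) y ≤ L := by
  refine (dist_pi_le_iff hL).2 fun i => ?_
  have hxi := CornerBox.mem_latticePoints.1 hx i
  have hxlower : r * B.lower i ≤ r * x i :=
    mul_le_mul_of_nonneg_left (mod_cast hxi.1.le) hr
  have hxupper : r * x i ≤ r * B.upper i := mul_le_mul_of_nonneg_left (mod_cast hxi.2) hr
  have hlower := abs_le.1 (hT.abs_lower_sub_le i)
  have hupper := abs_le.1 (hT.abs_upper_sub_le i)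
  have hwidthi := hwidth i
  rw [CornerBox.width, Int.cast_sub, mul_sub] at hwidthi
  rw [Real.dist_eq, scaleBy, abs_le]
  constructor <;> linarith [hy.1 i, hy.2 i]

variable [NeZero d]

/-- Every cell down to stage `D` contains its expected number of points of `S`, up to a relative
error which grows as the cells shrink: it is `η` divided by the side length of the cell. -/
def IsBalanced (n : ℕ) (m : ℤ) (η : ℝ) (D : ℕ) (S : Finset (Fin d → ℤ)) : Prop :=
  ∀ w : List Bool, w.length ≤ D →
    |#(S ∩ (cell d m w).latticePoints) - (cell d m w).expectedCount (n / m)| ≤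
      η / cellScale d n w.length * (cell d m w).expectedCount (n / m)

lemma IsBalanced.card_pos_and_abs_div_sub_le (hS : IsBalanced n m η D S) (hη : 0 ≤ η) (hnm : n ≤ m)
    (hscale : 4 ≤ cellScale d n D) (hηscale : 2 * η ≤ cellScale d n D) (hw : w.length < D) {τ : ℝ}
    (hτ0 : 0 ≤ τ) (hτ1 : τ ≤ 1)
    (hτ : (cell d m (false :: w)).expectedCount (n / m) =
      (cell d m w).expectedCount (n / m) * τ) :
    (0 : ℝ) < #(S ∩ (cell d m w).latticePoints) ∧
      |(#(S ∩ (cell d m (false :: w)).latticePoints) / #(S ∩ (cell d m w).latticePoints) : ℝ) - τ| ≤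
        6 * (η / cellScale d n w.length) := by
  have hanti : cellScale d n D ≤ cellScale d n w.length := cellScale_anti d n hw.le
  have hanti' : cellScale d n D ≤ cellScale d n (w.length + 1) := cellScale_anti d n hw
  have hcount : 0 < (cell d m w).expectedCount (n / m) :=
    (by have : 0 < cellScale d n w.length := by linarith
        positivity : 0 < (cellScale d n w.length / 4) ^ d).trans_le
      (cellScale_div_four_pow_le_expectedCount hnm (hscale.trans hanti))
  refine abs_div_sub_le_of_abs_sub_le hcount hτ0 hτ1 ?_ (hS w hw.le) ?_
  · rw [div_le_iff₀ (by linarith)]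
    linarith
  · have hbalance := hS (false :: w) hw
    rw [hτ, mul_comm _ τ] at hbalance
    refine hbalance.trans (mul_le_mul_of_nonneg_right ?_ (by positivity))
    rw [← mul_div_assoc, List.length_cons, div_le_div_iff₀ (by linarith) (by linarith)]
    nlinarith [cellScale_le_two_mul_succ d n w.length]

lemma IsTargetBox.exists_cut_cell (hT : IsTargetBox S (n / m) δ (cell d m w) T)
    (hS : IsBalanced n m η D S) (hη : 0 ≤ η) (hnm : n ≤ m) (hscale : 4 ≤ cellScale d n D)
    (hηscale : 2 * η ≤ cellScale d n D) (hδ : δ ≤ cellScale d n D) (hw : w.length < D) :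
    ∃ x, ∀ side, IsTargetBox S (n / m) (δ + 24 * η) (cell d m (side :: w))
      (T.cut (Fin.ofNat d w.length) x side) := by
  have hcell := cell_lower_le_upper (d := d) (n.cast_nonneg.trans hnm) w (Fin.ofNat d w.length)
  have hanti : cellScale d n D ≤ cellScale d n w.length := cellScale_anti d n hw.le
  obtain ⟨τ, hτ0, hτ1, hτ⟩ := CornerBox.exists_mid_eq_lineMap hcell
  obtain ⟨hpos, hratio⟩ := hS.card_pos_and_abs_div_sub_le hη hnm hscale hηscale hw hτ0 hτ1
    (CornerBox.expectedCount_cut_false hτ _)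
  have hwidth : T.width (Fin.ofNat d w.length) ≤ 4 * cellScale d n w.length := by
    linarith [hT.width_le (Fin.ofNat d w.length),
      mul_width_cell_le hnm (hscale.trans hanti) (Fin.ofNat d w.length)]
  simp only [cell] at hratio ⊢
  refine hT.exists_cut (CornerBox.lower_le_mid hcell) (CornerBox.mid_le_upper hcell) hτ0 hτ1 hτ
    hpos ?_
  calc T.width (Fin.ofNat d w.length) * _
      ≤ 4 * cellScale d n w.length * (6 * (η / cellScale d n w.length)) :=
        mul_le_mul hwidth hratio (abs_nonneg _) (by linarith)
    _ = 24 * η := by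
        have : cellScale d n w.length ≠ 0 := by linarith
        field_simp
        ring

lemma IsTargetBox.hallCondition (hS : IsBalanced n m η D S) (hη : 0 ≤ η) (hnm : n ≤ m)
    (hL : 4 ≤ L) (hscale : L ≤ cellScale d n D) (hscale' : cellScale d n D ≤ 2 * L)
    (hηL : 24 * η * D ≤ L) (j : ℕ) (hw : w.length + j = D)
    (hT : IsTargetBox S (n / m) (24 * η * w.length) (cell d m w) T) :
    HallCondition (scaleBy (n / m)) (5 * L) (S ∩ (cell d m w).latticePoints)
      (Set.Icc T.lower T.upper) := by
  have hm : (0 : ℝ) ≤ m := mod_cast n.cast_nonneg.trans hnm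
  induction j generalizing w T with
  | zero =>
    obtain rfl : w.length = D := hw
    refine .of_dist_le hT.volume_Icc.le fun x hx y hy =>
      hT.dist_scaleBy_le (by positivity) (fun i => ?_) (by linarith) (mem_of_mem_inter_right hx) hy
    linarith [mul_width_cell_le hnm (hL.trans hscale) i]
  | succ j ih =>
    have hwD : w.length < D := by omega
    have hD : (1 : ℝ) ≤ D := mod_cast (by omega : 1 ≤ D)
    have hwD' : 24 * η * w.length ≤ 24 * η * D := by gcongr
    obtain ⟨x, hx⟩ := hT.exists_cut_cell hS hη hnm (hL.trans hscale) (by nlinarith) (by linarith)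
      hwD
    have hside (side : Bool) := ih (w := side :: w) (by rw [List.length_cons]; omega) (by
      simpa only [List.length_cons, Nat.cast_add_one, mul_add_one] using hx side)
    have hm' : 0 ≤ m := n.cast_nonneg.trans hnm
    rw [← latticePoints_cell_cons_union hm' w, inter_union_distrib_left]
    exact ((hside false).union (hside true) ((disjoint_latticePoints_cell_cons hm' w).mono
      inter_subset_right inter_subset_right)).mono (T.Icc_subset_cut_union_cut _ x)

lemma isTargetBox_cell_nil (hnm : n ≤ m) (hSgrid : S ⊆ (cell d m []).latticePoints)
    (hScard : #S = n ^ d) :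
    IsTargetBox S (n / m) 0 (cell d m []) ⟨0, fun _ => (n : ℝ)⟩ := by
  have hscale : (n / m : ℝ) * m = n :=
    div_mul_cancel_of_imp fun h => by
      have : m = 0 := mod_cast h
      exact mod_cast (by omega : n = 0)
  constructor
  · exact fun _ => n.cast_nonneg
  · simp [CornerBox.width, inter_eq_left.2 hSgrid, hScard]
  · simp [cell]
  · simp [cell, hscale]

lemma IsBalanced.hallCondition (hS : IsBalanced n m η D S) (hη : 0 ≤ η) (hnm : n ≤ m)
    (hL : 4 ≤ L) (hscale : L ≤ cellScale d n D) (hscale' : cellScale d n D ≤ 2 * L)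
    (hηL : 24 * η * D ≤ L) (hSgrid : S ⊆ (cell d m []).latticePoints) (hScard : #S = n ^ d) :
    HallCondition (scaleBy (n / m)) (5 * L) S (Set.Icc (0 : Fin d → ℝ) fun _ => (n : ℝ)) := by
  simpa only [inter_eq_left.2 hSgrid] using
    IsTargetBox.hallCondition (w := []) hS hη hnm hL hscale hscale' hηL D (Nat.zero_add D)
      (by simpa using isTargetBox_cell_nil hnm hSgrid hScard)

lemma hallCondition_of_le {R : ℝ} (hnm : n ≤ m) (hR : n ≤ R)
    (hSgrid : S ⊆ (cell d m []).latticePoints) (hScard : #S = n ^ d) :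
    HallCondition (scaleBy (n / m)) R S (Set.Icc (0 : Fin d → ℝ) fun _ => (n : ℝ)) := by
  have hT := isTargetBox_cell_nil hnm hSgrid hScard
  have hm : (0 : ℝ) ≤ m := mod_cast n.cast_nonneg.trans hnm
  have hvol : volume (Set.Icc (0 : Fin d → ℝ) fun _ => (n : ℝ)) ≤ #S := by
    simpa only [inter_eq_left.2 hSgrid] using hT.volume_Icc.le
  refine .of_dist_le hvol fun x hx y hy =>
    hT.dist_scaleBy_le (by positivity) (fun i => ?_) (n.cast_nonneg.trans hR) (hSgrid hx) hy
  have hupper := hT.abs_upper_sub_le i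
  simp only [cell, CornerBox.width, Pi.zero_apply, sub_zero, add_zero, abs_nonpos_iff,
    sub_eq_zero] at hupper ⊢
  rwa [← hupper]

end BalancedSets

section Lipschitz

variable {d n : ℕ} {x y : Fin d → ℤ}

lemma abs_sub_le_zdist (x y : Fin d → ℤ) (i : Fin d) : |(x i : ℝ) - y i| ≤ zdist x y :=
  Real.abs_le_sqrt (single_le_sum (f := fun i => ((x i : ℝ) - y i) ^ 2)
    (fun _ _ => sq_nonneg _) (mem_univ i))

lemma zdist_le_sqrt_mul {C : ℝ} (hC : 0 ≤ C) (h : ∀ i, |(x i : ℝ) - y i| ≤ C) :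
    zdist x y ≤ √d * C := by
  refine Real.sqrt_le_iff.2 ⟨by positivity, ?_⟩
  rw [mul_pow, Real.sq_sqrt d.cast_nonneg]
  calc ∑ i, ((x i : ℝ) - y i) ^ 2 ≤ ∑ _i : Fin d, C ^ 2 :=
        sum_le_sum fun i _ => sq_le_sq' (abs_le.1 (h i)).1 (abs_le.1 (h i)).2
    _ = d * C ^ 2 := by simp

lemma one_le_zdist (hxy : x ≠ y) : 1 ≤ zdist x y := by
  obtain ⟨i, hi⟩ := Function.ne_iff.1 hxy
  refine le_trans ?_ (abs_sub_le_zdist x y i)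
  exact_mod_cast Int.one_le_abs (sub_ne_zero.2 hi)

lemma card_grid (d n : ℕ) : #(grid d n) = n ^ d := by
  simp [grid]

variable {S : Finset (Fin d → ℤ)}

lemma Fleast_le {L : ℝ} (hL : 0 ≤ L) (f : (Fin d → ℤ) → Fin d → ℤ)
    (hmaps : ∀ x ∈ S, f x ∈ grid d n) (hsurj : ∀ y ∈ grid d n, ∃ x ∈ S, f x = y)
    (hlip : ∀ x ∈ S, ∀ y ∈ S, zdist (f x) (f y) ≤ L * zdist x y) : Fleast d n S ≤ L := by
  by_cases hbdd : BddBelow {L : ℝ | ∃ f : (Fin d → ℤ) → (Fin d → ℤ),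
    (∀ x ∈ S, f x ∈ grid d n) ∧ (∀ y ∈ grid d n, ∃ x ∈ S, f x = y) ∧
    (∀ x ∈ S, ∀ y ∈ S, zdist (f x) (f y) ≤ L * zdist x y)}
  · exact csInf_le hbdd ⟨f, hmaps, hsurj, hlip⟩
  -- A set with at most one point has negative Lipschitz constants; then `sInf` is `0`.
  · exact (Real.sInf_of_not_bddBelow hbdd).trans_le hL

lemma zdist_le_mul_zdist_of_abs_mul_sub_le {r ρ : ℝ} (hr0 : 0 ≤ r) (hr1 : r ≤ 1) (hρ : 0 ≤ ρ)
    {x' y' : Fin d → ℤ} (hxx' : x ≠ x') (hxy : ∀ i, |r * x i - y i| ≤ ρ)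
    (hxy' : ∀ i, |r * x' i - y' i| ≤ ρ) :
    zdist y y' ≤ √d * (2 * ρ + 1) * zdist x x' := by
  have hdist := one_le_zdist hxx'
  rw [mul_assoc]
  refine zdist_le_sqrt_mul (by positivity) fun i => ?_
  have hr : |r * (x i - x' i : ℝ)| ≤ zdist x x' := by
    rw [abs_mul, abs_of_nonneg hr0]
    exact (mul_le_of_le_one_left (abs_nonneg _) hr1).trans (abs_sub_le_zdist x x' i)
  have hi := abs_le.1 (hxy i)
  have hi' := abs_le.1 (hxy' i)
  rw [abs_le] at hr ⊢
  constructor <;> nlinarith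

lemma Fleast_le_of_injective {r ρ : ℝ} (hr0 : 0 ≤ r) (hr1 : r ≤ 1) (hρ : 0 ≤ ρ)
    (hScard : #S = n ^ d) {g : grid d n → Fin d → ℤ} (hg : Function.Injective g)
    (hgS : ∀ y, g y ∈ S) (hgρ : ∀ y i, |r * g y i - y.1 i| ≤ ρ) :
    Fleast d n S ≤ √d * (2 * ρ + 1) := by
  have hpreimage : ∀ x ∈ S, ∃ y, g y = x := by
    have himage : univ.image g = S :=
      eq_of_subset_of_card_le (image_subset_iff.2 fun y _ => hgS y) (by
        rw [card_image_of_injective _ hg, card_univ, Fintype.card_coe, card_grid, hScard])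
    exact fun x hx => by simpa using (himage ▸ hx : x ∈ univ.image g)
  have hinv (y : grid d n) : Function.extend g Subtype.val 0 (g y) = y.1 := hg.extend_apply _ _ y
  refine Fleast_le (by positivity) (Function.extend g Subtype.val 0) (fun x hx => ?_)
    (fun y hy => ⟨g ⟨y, hy⟩, hgS _, hinv _⟩) fun x hx x' hx' => ?_
  · obtain ⟨y, rfl⟩ := hpreimage x hx
    exact hinv y ▸ y.2
  · obtain ⟨y, rfl⟩ := hpreimage x hx
    obtain ⟨y', rfl⟩ := hpreimage x' hx'
    rw [hinv, hinv]
    rcases eq_or_ne y y' with rfl | hyy'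
    · simp [zdist]
    · exact zdist_le_mul_zdist_of_abs_mul_sub_le hr0 hr1 hρ (hg.ne hyy') (hgρ y) (hgρ y')

/-- The half-open unit cube with upper corner `y`. -/
def unitCube (y : Fin d → ℤ) : Set (Fin d → ℝ) :=
  Set.univ.pi fun i => Set.Ioc (y i - 1 : ℝ) (y i)

lemma measurableSet_unitCube (y : Fin d → ℤ) : MeasurableSet (unitCube y) :=
  .univ_pi fun _ => measurableSet_Ioc

lemma volume_unitCube (y : Fin d → ℤ) : volume (unitCube y) = 1 := by
  simp [unitCube, Real.volume_pi_Ioc]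

lemma disjoint_unitCube (hxy : x ≠ y) : Disjoint (unitCube x) (unitCube y) := by
  obtain ⟨i, hi⟩ := Function.ne_iff.1 hxy
  refine Set.disjoint_univ_pi.2 ⟨i, Set.disjoint_left.2 fun z hx hy => hi ?_⟩
  have hx' : ⌈z⌉ = x i := Int.ceil_eq_iff.2 hx
  exact hx' ▸ Int.ceil_eq_iff.2 hy

lemma unitCube_subset_Icc (hy : y ∈ grid d n) :
    unitCube y ⊆ Set.Icc (0 : Fin d → ℝ) fun _ => (n : ℝ) := by
  intro z hz
  simp only [grid, Fintype.mem_piFinset, mem_Icc] at hy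
  refine ⟨fun i => ?_, fun i => (hz i trivial).2.trans ?_⟩
  · have hyi : (1 : ℝ) ≤ y i := mod_cast (hy i).1
    exact (sub_nonneg.2 hyi).trans (hz i trivial).1.le
  · exact Int.cast_le.2 (hy i).2

lemma HallCondition.Fleast_le {r R : ℝ}
    (h : HallCondition (scaleBy r) R S (Set.Icc (0 : Fin d → ℝ) fun _ => (n : ℝ)))
    (hr0 : 0 ≤ r) (hr1 : r ≤ 1) (hR : 0 ≤ R) (hScard : #S = n ^ d) :
    Fleast d n S ≤ √d * (2 * R + 3) := by
  obtain ⟨g, hg, hgS⟩ := h.exists_injective (U := fun y : grid d n => unitCube y.1)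
    (fun y => measurableSet_unitCube y.1)
    (fun y y' hyy' => disjoint_unitCube (Subtype.coe_injective.ne hyy'))
    (fun y => unitCube_subset_Icc y.2) (fun y => (volume_unitCube y.1).ge)
  refine (Fleast_le_of_injective hr0 hr1 (by positivity : 0 ≤ R + 1) hScard hg (fun y => (hgS y).1)
    fun y i => ?_).trans_eq (by ring)
  obtain ⟨z, hz, hdist⟩ := (hgS y).2
  have hdisti := abs_le.1 ((dist_le_pi_dist _ _ i).trans hdist)
  have hzi := hz i trivial
  rw [scaleBy] at hdisti
  rw [abs_le]
  constructor <;> linarith [hzi.1, hzi.2]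

end Lipschitz

section RandomConfigurations

variable {d : ℕ} {m : ℤ}

lemma coe_gridPt_injective : Function.Injective fun (x : gridPt d m) i => (x i : ℤ) :=
  fun _ _ h => funext fun i => Subtype.ext (congrFun h i)

lemma card_toLattice (S : Finset (gridPt d m)) : #(toLattice S) = #S :=
  card_image_of_injective S coe_gridPt_injective

lemma card_gridPt (hm : 0 ≤ m) : (Fintype.card (gridPt d m) : ℝ) = m ^ d := by
  have hside : ((m.toNat : ℕ) : ℝ) = m := mod_cast Int.toNat_of_nonneg hm
  simp [hside]

/-- The points of `P` in the grid `{1,…,m}^d`. -/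
noncomputable def gridTrace (m : ℤ) (P : Finset (Fin d → ℤ)) : Finset (gridPt d m) :=
  {x | (fun i => (x i : ℤ)) ∈ P}

lemma toLattice_inter (S : Finset (gridPt d m)) (P : Finset (Fin d → ℤ)) :
    toLattice S ∩ P = toLattice (S ∩ gridTrace m P) := by
  ext x
  simp only [toLattice, gridTrace, mem_inter, mem_image, mem_filter, mem_univ, true_and]
  grind

variable [NeZero d]

lemma toLattice_univ : toLattice (univ : Finset (gridPt d m)) = (cell d m []).latticePoints := by
  ext x
  simp only [toLattice, mem_image, mem_univ, true_and, CornerBox.mem_latticePoints, cell,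
    Pi.zero_apply]
  constructor
  · rintro ⟨y, rfl⟩ i
    exact mem_Icc.1 (y i).2
  · exact fun hx => ⟨fun i => ⟨x i, mem_Icc.2 (hx i)⟩, rfl⟩

lemma toLattice_subset_cell_nil (S : Finset (gridPt d m)) :
    toLattice S ⊆ (cell d m []).latticePoints :=
  toLattice_univ (d := d) (m := m) ▸ image_subset_image (subset_univ S)

lemma hypergeometricMean_gridTrace_cell (hm : 0 ≤ m) (n : ℕ) (w : List Bool) :
    hypergeometricMean (n ^ d) (gridTrace m (cell d m w).latticePoints) =
      (cell d m w).expectedCount (n / m) := by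
  have htrace :
      toLattice (gridTrace m (cell d m w).latticePoints) = (cell d m w).latticePoints := by
    rw [← univ_inter (gridTrace m _), ← toLattice_inter, toLattice_univ,
      inter_eq_right.2 (latticePoints_cell_subset_nil hm w)]
  rw [hypergeometricMean, ← card_toLattice, htrace, card_gridPt hm,
    CornerBox.expectedCount_eq_card_mul_pow (cell_lower_le_upper hm w), Fintype.card_fin,
    Nat.cast_pow, div_pow]

variable {n D : ℕ} {η E : ℝ}

lemma uniformProb_cell_unbalanced_le (hη : 0 ≤ η) (hnm : n ≤ m) {w : List Bool}
    (hε : η / cellScale d n w.length ≤ 2)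
    (hE : E ≤ (η / cellScale d n w.length) ^ 2 * (cell d m w).expectedCount (n / m) / 4) :
    uniformProb {S : Finset (gridPt d m) // #S = n ^ d} (fun S =>
        η / cellScale d n w.length * (cell d m w).expectedCount (n / m) <
          |#(toLattice S.1 ∩ (cell d m w).latticePoints) - (cell d m w).expectedCount (n / m)|) ≤
      2 * Real.exp (-E) := by
  have hm : 0 ≤ m := n.cast_nonneg.trans hnm
  have hcard : n ^ d ≤ Fintype.card (gridPt d m) := by
    have hpow : ((n : ℝ)) ^ d ≤ (m : ℝ) ^ d := pow_le_pow_left₀ n.cast_nonneg (mod_cast hnm) d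
    rw [← card_gridPt hm] at hpow
    exact_mod_cast hpow
  simp only [toLattice_inter, card_toLattice]
  rw [← hypergeometricMean_gridTrace_cell hm] at hE ⊢
  refine (uniformProb_abs_card_inter_sub_gt_le _ hcard
    (div_nonneg hη (cellScale_nonneg d n _)) hε).trans ?_
  gcongr

lemma card_sigma_vector_bool_le (D : ℕ) :
    Fintype.card (Σ s : Fin (D + 1), List.Vector Bool s) ≤ 2 * 2 ^ D := by
  rw [Fintype.card_sigma]
  simp only [card_vector, Fintype.card_bool]
  rw [Fin.sum_univ_eq_sum_range (fun s => 2 ^ s), ← pow_succ']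
  exact (Nat.geomSum_lt le_rfl fun s hs => mem_range.1 hs).le

lemma uniformProb_not_isBalanced_le (hη : 0 ≤ η) (hnm : n ≤ m)
    (hε : ∀ s ≤ D, η / cellScale d n s ≤ 2)
    (hE : ∀ w : List Bool, w.length ≤ D →
      E ≤ (η / cellScale d n w.length) ^ 2 * (cell d m w).expectedCount (n / m) / 4) :
    uniformProb {S : Finset (gridPt d m) // #S = n ^ d}
        (fun S => ¬ IsBalanced n m η D (toLattice S.1)) ≤ 4 * 2 ^ D * Real.exp (-E) := by
  let Word := Σ s : Fin (D + 1), List.Vector Bool s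
  have hlength (k : Word) : k.2.1.length ≤ D := k.2.2.trans_le (Nat.le_of_lt_succ k.1.2)
  have hunion : ∀ S : {S : Finset (gridPt d m) // #S = n ^ d},
      ¬ IsBalanced n m η D (toLattice S.1) → ∃ k : Word,
        η / cellScale d n k.2.1.length * (cell d m k.2.1).expectedCount (n / m) <
          |#(toLattice S.1 ∩ (cell d m k.2.1).latticePoints) -
            (cell d m k.2.1).expectedCount (n / m)| := by
    intro S hS
    simp only [IsBalanced, not_forall, not_le] at hS
    obtain ⟨w, hw, hbad⟩ := hS
    exact ⟨⟨⟨w.length, Nat.lt_succ_of_le hw⟩, ⟨w, rfl⟩⟩, hbad⟩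
  calc _ ≤ _ := uniformProb_mono hunion
    _ ≤ _ := uniformProb_exists_le_sum _
    _ ≤ ∑ _k : Word, 2 * Real.exp (-E) := sum_le_sum fun k _ =>
        uniformProb_cell_unbalanced_le hη hnm (hε _ (hlength k)) (hE _ (hlength k))
    _ = Fintype.card Word * (2 * Real.exp (-E)) := by simp
    _ ≤ (2 * 2 ^ D : ℕ) * (2 * Real.exp (-E)) := by
        gcongr
        exact card_sigma_vector_bool_le D
    _ = 4 * 2 ^ D * Real.exp (-E) := by
        push_cast
        ring

end RandomConfigurations

section LargeDeviation

/-- The constant `C` for which `C * (log₂ n) ^ 3 ≤ L ^ d` makes every cell of side at least `L`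
violate its balance condition with probability at most `2 / n ^ (d + 2)`. -/
def deviationConst (d : ℕ) : ℝ :=
  24 ^ 2 * d ^ 2 * 4 ^ (d + 1) * (d + 2)

variable {d n : ℕ} {L : ℝ}

lemma four_le_deviationConst (hd : 1 ≤ d) : 4 ≤ deviationConst d := by
  have hd' : (1 : ℝ) ≤ d := mod_cast hd
  calc (4 : ℝ) = 1 * 1 * 4 ^ 1 * 1 := by norm_num
    _ ≤ 24 ^ 2 * d ^ 2 * 4 ^ (d + 1) * (d + 2) := by
        gcongr
        · norm_num
        · exact one_le_pow₀ hd'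
        · norm_num
        · omega
        · linarith

lemma mul_pow_three_le_mul_rpow_pow {C ℓ q : ℝ} (hC : 1 ≤ C) (hℓ : 1 ≤ ℓ) (hd : 1 ≤ d)
    (hq : 3 / (d : ℝ) ≤ q) : C * ℓ ^ 3 ≤ (C * ℓ ^ q) ^ d := by
  have hd' : (0 : ℝ) < d := mod_cast hd
  have hpow : ℓ ^ 3 ≤ (ℓ ^ q) ^ d := by
    rw [← Real.rpow_natCast ℓ 3, ← Real.rpow_mul_natCast (by linarith)]
    exact Real.rpow_le_rpow_of_exponent_le hℓ (by rwa [div_le_iff₀ hd'] at hq)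
  rw [mul_pow]
  gcongr
  exact le_self_pow₀ hC (by omega)

lemma one_le_logb_two (hn : 2 ≤ n) : 1 ≤ Real.logb 2 n := by
  rw [Real.le_logb_iff_rpow_le one_lt_two (by positivity), Real.rpow_one]
  exact_mod_cast hn

lemma natCast_le_logb_two {K : ℕ} (hn : 2 ≤ n) (hK : (2 : ℝ) ^ K ≤ n) : K ≤ Real.logb 2 n := by
  rwa [Real.le_logb_iff_rpow_le one_lt_two (by positivity), Real.rpow_natCast]

lemma log_le_logb_two (hn : 2 ≤ n) : Real.log n ≤ Real.logb 2 n := by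
  rw [Real.logb, le_div_iff₀ (Real.log_pos one_lt_two)]
  exact mul_le_of_le_one_right (Real.log_nonneg (mod_cast (by omega : 1 ≤ n)))
    (by linarith [Real.log_two_lt_d9])

lemma exists_pow_two_near (hL : 1 ≤ L) (hLn : L ≤ n) :
    ∃ K : ℕ, (2 : ℝ) ^ K ≤ n ∧ L ≤ n / 2 ^ K ∧ n / 2 ^ K ≤ 2 * L := by
  have hL0 : 0 < L := by linarith
  obtain ⟨K, hlower, hupper⟩ := exists_nat_pow_near ((one_le_div hL0).2 hLn) one_lt_two
  refine ⟨K, hlower.trans (div_le_self n.cast_nonneg hL), ?_, ?_⟩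
  · rw [le_div_iff₀ (by positivity), mul_comm]
    exact (le_div_iff₀ hL0).1 hlower
  · rw [div_le_iff₀ (by positivity)]
    rw [div_lt_iff₀ hL0, pow_succ] at hupper
    linarith

-- For `d ≥ 2` the exponent grows with the side length `l` of the cell.
lemma mul_log_le_sq_mul_pow {l : ℝ} (hd : 2 ≤ d) (hn : 2 ≤ n) (hL0 : 0 < L)
    (hL : deviationConst d * Real.logb 2 n ^ 3 ≤ L ^ d) (hl : L ≤ l) :
    (d + 2) * Real.log n ≤ (L / (24 * d * Real.logb 2 n) / l) ^ 2 * (l / 4) ^ d / 4 := by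
  have hℓ := one_le_logb_two hn
  set ℓ := Real.logb 2 n
  have hd0 : (0 : ℝ) < d := mod_cast (by omega : 0 < d)
  have hl0 : 0 < l := hL0.trans_le hl
  obtain ⟨e, rfl⟩ := Nat.exists_eq_add_of_le' hd
  calc (((e + 2 : ℕ) : ℝ) + 2) * Real.log n ≤ ((e + 2 : ℕ) + 2) * ℓ := by
        gcongr
        exact log_le_logb_two hn
    _ = deviationConst (e + 2) * ℓ ^ 3 / (24 ^ 2 * (e + 2 : ℕ) ^ 2 * ℓ ^ 2 * 4 ^ (e + 2 + 1)) := by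
        rw [deviationConst]
        field_simp
    _ ≤ L ^ (e + 2) / (24 ^ 2 * (e + 2 : ℕ) ^ 2 * ℓ ^ 2 * 4 ^ (e + 2 + 1)) := by gcongr
    _ = L ^ 2 * L ^ e / (24 ^ 2 * (e + 2 : ℕ) ^ 2 * ℓ ^ 2 * 4 ^ (e + 2 + 1)) := by ring
    _ ≤ L ^ 2 * l ^ e / (24 ^ 2 * (e + 2 : ℕ) ^ 2 * ℓ ^ 2 * 4 ^ (e + 2 + 1)) := by gcongr
    _ = (L / (24 * (e + 2 : ℕ) * ℓ) / l) ^ 2 * (l / 4) ^ (e + 2) / 4 := by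
        rw [div_pow, div_pow, div_pow]
        field_simp
        ring

end LargeDeviation

section Main

variable {d n : ℕ} {m : ℤ} {L : ℝ}

lemma HallCondition.Fleast_toLattice_le {S : Finset (gridPt d m)} {R : ℝ}
    (h : HallCondition (scaleBy (n / m)) R (toLattice S)
      (Set.Icc (0 : Fin d → ℝ) fun _ => (n : ℝ)))
    (hnm : n ≤ m) (hR : 0 ≤ R) (hS : #S = n ^ d) :
    Fleast d n (toLattice S) ≤ √d * (2 * R + 3) := by
  have hnm' : (n : ℝ) ≤ m := mod_cast hnm
  have hm : (0 : ℝ) ≤ m := n.cast_nonneg.trans hnm'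
  exact h.Fleast_le (by positivity) (div_le_one_of_le₀ hnm' hm) hR ((card_toLattice S).trans hS)

lemma four_mul_two_pow_mul_exp_le {K : ℕ} (hn : 1 ≤ n) (hK : (2 : ℝ) ^ K ≤ n) :
    4 * 2 ^ (d * K) * Real.exp (-((d + 2) * Real.log n)) ≤ 4 * (n : ℝ) ^ (-2 : ℝ) := by
  have hn0 : (0 : ℝ) < n := mod_cast hn
  have hexp : Real.exp (-((d + 2) * Real.log n)) = ((n : ℝ) ^ d)⁻¹ * (n : ℝ) ^ (-2 : ℝ) := by
    rw [← Real.rpow_natCast, ← Real.rpow_neg hn0.le, ← Real.rpow_add hn0, Real.rpow_def_of_pos hn0]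
    ring_nf
  rw [hexp, mul_comm d K, pow_mul, mul_assoc, ← mul_assoc (((2 : ℝ) ^ K) ^ d)]
  gcongr
  refine mul_le_of_le_one_left (by positivity) ?_
  rw [← div_eq_mul_inv]
  exact div_le_one_of_le₀ (by gcongr) (by positivity)

lemma uniformProb_not_isBalanced_le_rpow [NeZero d] {K : ℕ} (hd : 2 ≤ d) (hn : 2 ≤ n) (hnm : n ≤ m)
    (hL4 : 4 ≤ L) (hL : deviationConst d * Real.logb 2 n ^ 3 ≤ L ^ d) (hK : (2 : ℝ) ^ K ≤ n)
    (hscale : L ≤ cellScale d n (d * K)) :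
    uniformProb {S : Finset (gridPt d m) // #S = n ^ d}
        (fun S => ¬ IsBalanced n m (L / (24 * d * Real.logb 2 n)) (d * K) (toLattice S.1)) ≤
      4 * (n : ℝ) ^ (-2 : ℝ) := by
  have hℓ := one_le_logb_two hn
  have hd' : (2 : ℝ) ≤ d := mod_cast hd
  have hLs {s : ℕ} (hs : s ≤ d * K) : L ≤ cellScale d n s :=
    hscale.trans (cellScale_anti d n hs)
  refine (uniformProb_not_isBalanced_le (E := (d + 2) * Real.log n) (by positivity) hnm
    (fun s hs => ?_) fun w hw => ?_).trans (four_mul_two_pow_mul_exp_le (by omega) hK)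
  · have hη : L / (24 * d * Real.logb 2 n) ≤ L := div_le_self (by linarith) (by nlinarith)
    rw [div_le_iff₀ (by linarith [hLs hs])]
    linarith [hLs hs]
  · refine (mul_log_le_sq_mul_pow hd hn (by linarith) hL (hLs hw)).trans ?_
    gcongr
    exact cellScale_div_four_pow_le_expectedCount hnm (hL4.trans (hLs hw))

lemma uniformProb_sqrt_mul_lt_Fleast_le (hd : 2 ≤ d) (hn : 2 ≤ n) (hnm : n ≤ m) (hL4 : 4 ≤ L)
    (hL : deviationConst d * Real.logb 2 n ^ 3 ≤ L ^ d) :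
    uniformProb {S : Finset (gridPt d m) // #S = n ^ d}
        (fun S => √d * (10 * L + 3) < Fleast d n (toLattice S.1)) ≤ 4 * (n : ℝ) ^ (-2 : ℝ) := by
  have : NeZero d := ⟨by omega⟩
  suffices hhall : uniformProb {S : Finset (gridPt d m) // #S = n ^ d} (fun S =>
      ¬ HallCondition (scaleBy (n / m)) (5 * L) (toLattice S.1)
        (Set.Icc (0 : Fin d → ℝ) fun _ => (n : ℝ))) ≤ 4 * (n : ℝ) ^ (-2 : ℝ) by
    refine (uniformProb_mono fun S hS hhall => hS.not_ge ?_).trans hhall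
    exact (hhall.Fleast_toLattice_le hnm (by linarith) S.2).trans_eq (by ring)
  have hcard (S : {S : Finset (gridPt d m) // #S = n ^ d}) : #(toLattice S.1) = n ^ d :=
    (card_toLattice S.1).trans S.2
  rcases le_total (n : ℝ) L with hnL | hLn
  · rw [uniformProb_eq_zero fun S => not_not.2 (hallCondition_of_le hnm (by linarith)
      (toLattice_subset_cell_nil S.1) (hcard S))]
    positivity
  obtain ⟨K, hK, hscale, hscale'⟩ := exists_pow_two_near (by linarith) hLn
  rw [← Nat.mul_div_cancel_left K (by omega : 0 < d), ← cellScale] at hscale hscale'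
  have hℓ := one_le_logb_two hn
  have hηK : 24 * (L / (24 * d * Real.logb 2 n)) * (d * K : ℕ) ≤ L :=
    calc 24 * (L / (24 * d * Real.logb 2 n)) * (d * K : ℕ) = L * (K / Real.logb 2 n) := by
          push_cast
          field_simp
      _ ≤ L := mul_le_of_le_one_right (by linarith)
          (div_le_one_of_le₀ (natCast_le_logb_two hn hK) (by linarith))
  refine (uniformProb_mono fun S hS hbalanced => hS ?_).trans
    (uniformProb_not_isBalanced_le_rpow hd hn hnm hL4 hL hK hscale)
  exact hbalanced.hallCondition (by positivity) hnm hL4 hscale hscale' hηK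
    (toLattice_subset_cell_nil S.1) (hcard S)

theorem stmt_11_general (d : ℕ) (hd : 2 ≤ d) :
    ∃ Υ : ℝ, 0 < Υ ∧ ∀ q : ℝ, 3 / (d : ℝ) ≤ q → ∀ (n : ℕ) (m : ℤ), 2 ≤ n → n ≤ m →
      uniformProb {S : Finset (gridPt d m) // #S = n ^ d}
          (fun S => Υ * Real.logb 2 n ^ q < Fleast d n (toLattice S.1)) ≤
        Υ * (n : ℝ) ^ (-2 : ℝ) := by
  have hC := four_le_deviationConst (by omega : 1 ≤ d)
  have hd' : (2 : ℝ) ≤ d := mod_cast hd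
  have hsqrt : √(d : ℝ) ≤ d := Real.sqrt_le_self_iff.2 (Or.inr (by linarith))
  refine ⟨13 * d * deviationConst d, by positivity, fun q hq n m hn hnm => ?_⟩
  have hℓ := one_le_logb_two hn
  have hq0 : 0 ≤ q := le_trans (by positivity) hq
  have hL4 : 4 ≤ deviationConst d * Real.logb 2 n ^ q :=
    hC.trans (le_mul_of_one_le_right (by linarith) (Real.one_le_rpow hℓ hq0))
  have hL := mul_pow_three_le_mul_rpow_pow (C := deviationConst d) (by linarith) hℓ (by omega) hq
  refine (uniformProb_mono fun S hS => lt_of_le_of_lt ?_ hS).trans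
    ((uniformProb_sqrt_mul_lt_Fleast_le hd hn hnm hL4 hL).trans ?_)
  · calc √d * (10 * (deviationConst d * Real.logb 2 n ^ q) + 3)
        ≤ d * (13 * (deviationConst d * Real.logb 2 n ^ q)) :=
          mul_le_mul hsqrt (by linarith) (by linarith) (by linarith)
      _ = 13 * d * deviationConst d * Real.logb 2 n ^ q := by ring
  · gcongr
    nlinarith

lemma natCast_le_floor_mul_of_rpow_le {c : ℝ} (hn : 2 ≤ n)
    (hc : (1 + 2 ^ (d + 7) / Real.logb 2 n) ^ ((d : ℝ)⁻¹) ≤ c) : (n : ℤ) ≤ ⌊c * n⌋ := by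
  have hℓ := one_le_logb_two hn
  have hc1 : 1 ≤ c :=
    (Real.one_le_rpow (le_add_of_nonneg_right (by positivity)) (by positivity)).trans hc
  exact Int.le_floor.2 (mod_cast le_mul_of_one_le_left n.cast_nonneg hc1)

end Main

/-- For `d ≥ 2`, `q ≥ 1` with `q > 3/d`, there is `Υ = Υ(d) > 0` so that for all `n ≥ 2`
and `c ≥ (1 + 2^(d+7)/log₂ n)^(1/d)`, a uniformly random `n^d`-element subset `S` of
`{1,…,⌊c·n⌋}^d` satisfies `ℙ[F_n(S) > Υ·(log₂ n)^q] ≤ Υ·n^(−2)`. -/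
theorem stmt_11 (d : ℕ) (hd : 2 ≤ d) (q : ℝ) (hq1 : 1 ≤ q) (hq2 : 3 / (d : ℝ) < q) :
    ∃ Υ : ℝ, 0 < Υ ∧
      ∀ (n : ℕ) (c : ℝ), 2 ≤ n →
        (1 + 2 ^ (d + 7) / Real.logb 2 n) ^ ((d : ℝ)⁻¹) ≤ c →
        uniformProb {S : Finset (gridPt d ⌊c * n⌋) // S.card = n ^ d}
            (fun S => Υ * Real.logb 2 n ^ q < Fleast d n (toLattice S.1)) ≤
          Υ * (n : ℝ) ^ (-2 : ℝ) := by
  obtain ⟨Υ, hΥ, hprob⟩ := stmt_11_general d hd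
  exact ⟨Υ, hΥ, fun n c hn hc => hprob q hq2.le n _ hn (natCast_le_floor_mul_of_rpow_le hn hc)⟩
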